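/- Stability of subsolutions under increasing limits: Assume (H1)–(H3). Let (V_m)_{m≥0} be a nondecreasing, uniformly bounded sequence of continuous functions on [0,T]×ℝⁿ such that for each m ≥ 1, V_m is a viscosity subsolution on [0,T)×ℝⁿ of min{ −∂ₜV_m − LV_m − f, V_m − MV_{m−1} } = 0 (test-function sense). Let V := sup_m V_m (the pointwise limit) and let V* be its upper semicontinuous envelope. Then for every (t,x) ∈ (0,T)×ℝⁿ and every (p,q,X) ∈ J^{2,+}V*(t,x), one has min{ −p − ⟨b(t,x), q⟩ − (1/2)tr[(σσᵀ)(t,x)X] − f(t,x), V*(t,x) − (MV*)(t,x) } ≤ 0. -/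

import Mathlib

open scoped BigOperators RealInnerProductSpace
open Filter Matrix Set Topology

noncomputable section

/-- Euclidean state space ℝⁿ. -/
abbrev EucSp (n : ℕ) := EuclideanSpace ℝ (Fin n)

variable {n d : ℕ}

/-- The parabolic domain `[0, T) × ℝⁿ`. -/
def pdom (T : ℝ) (n : ℕ) : Set (ℝ × EucSp n) := Set.Ico (0 : ℝ) T ×ˢ (Set.univ : Set (EucSp n))

/-- Time derivative `∂ₜφ(t,x)`. -/
def tderiv (φ : ℝ → EucSp n → ℝ) (t : ℝ) (x : EucSp n) : ℝ :=
  deriv (fun s => φ s x) t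

/-- Spatial gradient `∇ₓφ(t,x)`. -/
def xgrad (φ : ℝ → EucSp n → ℝ) (t : ℝ) (x : EucSp n) : EucSp n :=
  gradient (fun y => φ t y) x

/-- Spatial Hessian matrix `∇ₓ²φ(t,x)`. -/
def xhess (φ : ℝ → EucSp n → ℝ) (t : ℝ) (x : EucSp n) : Matrix (Fin n) (Fin n) ℝ :=
  fun i j => fderiv ℝ (fun y => xgrad φ t y) x (EuclideanSpace.single j 1) i

/-- The second order operator `Lφ(t,x) = ⟨b, ∇ₓφ⟩ + ½ tr[σσᵀ ∇ₓ²φ]`. -/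
def Lop (b : ℝ → EucSp n → EucSp n) (σ : ℝ → EucSp n → Matrix (Fin n) (Fin d) ℝ)
    (φ : ℝ → EucSp n → ℝ) (t : ℝ) (x : EucSp n) : ℝ :=
  ⟪b t x, xgrad φ t x⟫ + (1 / 2) * (σ t x * (σ t x)ᵀ * xhess φ t x).trace

/-- `φ` is of class `C^{1,2}` on the set `s`. -/
structure IsC12On (φ : ℝ → EucSp n → ℝ) (s : Set (ℝ × EucSp n)) : Prop where
  cont : ContinuousOn (fun p : ℝ × EucSp n => φ p.1 p.2) s
  diff_t : ∀ p ∈ s, DifferentiableAt ℝ (fun t => φ t p.2) p.1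
  cont_t : ContinuousOn (fun p : ℝ × EucSp n => tderiv φ p.1 p.2) s
  diff_x : ∀ p ∈ s, DifferentiableAt ℝ (fun y => φ p.1 y) p.2
  diff_grad : ∀ p ∈ s, DifferentiableAt ℝ (fun y => xgrad φ p.1 y) p.2
  cont_grad : ContinuousOn (fun p : ℝ × EucSp n => xgrad φ p.1 p.2) s
  cont_hess : ContinuousOn (fun p : ℝ × EucSp n => xhess φ p.1 p.2) s

/-- The intervention operator `(MW)(t,x) = sup_{ξ∈K} [W(t,x+ξ) − c(t,x,ξ)]`. -/
def Mop (K : Set (EucSp n)) (c : ℝ → EucSp n → EucSp n → ℝ) (W : ℝ → EucSp n → ℝ)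
    (t : ℝ) (x : EucSp n) : ℝ :=
  sSup ((fun ξ => W t (x + ξ) - c t x ξ) '' K)

/-- The intervention operator `(M̃W)(t,x) = sup_{ξ∈K} [W(t,x+ξ) − e^t c(t,x,ξ)]`. -/
def Mtop (K : Set (EucSp n)) (c : ℝ → EucSp n → EucSp n → ℝ) (W : ℝ → EucSp n → ℝ)
    (t : ℝ) (x : EucSp n) : ℝ :=
  sSup ((fun ξ => W t (x + ξ) - Real.exp t * c t x ξ) '' K)

/-- Upper semicontinuous envelope, limits taken with `s < T`. -/
def uscEnvT (T : ℝ) (W : ℝ → EucSp n → ℝ) (t : ℝ) (x : EucSp n) : ℝ :=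
  limsup (fun p : ℝ × EucSp n => W p.1 p.2) (𝓝[{p : ℝ × EucSp n | p.1 < T}] (t, x))

/-- Lower semicontinuous envelope, limits taken with `s < T`. -/
def lscEnvT (T : ℝ) (W : ℝ → EucSp n → ℝ) (t : ℝ) (x : EucSp n) : ℝ :=
  liminf (fun p : ℝ × EucSp n => W p.1 p.2) (𝓝[{p : ℝ × EucSp n | p.1 < T}] (t, x))

/-- Quadratic form `⟨Xv, v⟩` of a matrix. -/
def qform (X : Matrix (Fin n) (Fin n) ℝ) (v : EucSp n) : ℝ :=
  ∑ i, ∑ j, X i j * v j * v i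

/-- Parabolic subjet membership: `(p,q,X) ∈ J^{2,−}V(t,x)`. -/
def InSubjet (V : ℝ → EucSp n → ℝ) (t : ℝ) (x : EucSp n)
    (p : ℝ) (q : EucSp n) (X : Matrix (Fin n) (Fin n) ℝ) : Prop :=
  X.IsSymm ∧
  ∀ ε > (0 : ℝ), ∀ᶠ sy : ℝ × EucSp n in 𝓝 (t, x),
    V sy.1 sy.2 ≥ V t x + p * (sy.1 - t) + ⟪q, sy.2 - x⟫
      + (1 / 2) * qform X (sy.2 - x) - ε * (|sy.1 - t| + ‖sy.2 - x‖ ^ 2)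

/-- Parabolic superjet membership: `(p,q,X) ∈ J^{2,+}V(t,x)`. -/
def InSuperjet (V : ℝ → EucSp n → ℝ) (t : ℝ) (x : EucSp n)
    (p : ℝ) (q : EucSp n) (X : Matrix (Fin n) (Fin n) ℝ) : Prop :=
  X.IsSymm ∧
  ∀ ε > (0 : ℝ), ∀ᶠ sy : ℝ × EucSp n in 𝓝 (t, x),
    V sy.1 sy.2 ≤ V t x + p * (sy.1 - t) + ⟪q, sy.2 - x⟫
      + (1 / 2) * qform X (sy.2 - x) + ε * (|sy.1 - t| + ‖sy.2 - x‖ ^ 2)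

/-!
A superjet element `(p, q, X)` of `V*` at `(t, x)` yields, for each `a > 0`, the function
`p (s - t) + ⟨q, y - x⟩ + ½ ⟨X (y - x), y - x⟩ + a (|s - t| + |y - x|²)`, which touches `V*` from
above strictly. Its time modulus is not differentiable at `t`, but strictness survives the
replacement of `|s - t|` by `√((s - t)² + δ²)`, whose slope is at most one, so the time derivative
of the resulting `C^{1,2}` function is at most `p + a`. Some `V_m` minus this function then has a
local maximum near `(t, x)`, with `V_m` almost equal to `V*(t, x)` there. The obstacle `M V_{m-1}`
is at most `M V*`, which is upper semicontinuous because `K` is compact. If both terms of the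
limiting minimum were positive, they would still be so at that maximum for small `a`, contradicting
the subsolution property of `V_m`.
-/

open Function (uncurry curry uncurry_apply_pair)

section UscEnvelope

variable {E β : Type*} [TopologicalSpace E] [ConditionallyCompleteLinearOrder β] {W : E → β}
  {z : E} {r : β}

/-- The upper semicontinuous envelope `W*(z) = limsup_{w → z} W(w)`. The limit includes `w = z`,
so that `W ≤ W*`. -/
def uscEnvelope (W : E → β) (z : E) : β := limsup W (𝓝 z)

lemma eventually_lt_of_uscEnvelope_lt (hW : BddAbove (range W)) (h : uscEnvelope W z < r) :
    ∀ᶠ w in 𝓝 z, W w < r :=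
  eventually_lt_of_limsup_lt h hW.isBoundedUnder_of_range

lemma frequently_lt_of_lt_uscEnvelope (hW : BddBelow (range W)) (h : r < uscEnvelope W z) :
    ∃ᶠ w in 𝓝 z, r < W w :=
  frequently_lt_of_lt_limsup hW.isBoundedUnder_of_range.isCoboundedUnder_le h

lemma uscEnvelope_le_of_eventually_le (hW : BddBelow (range W)) (h : ∀ᶠ w in 𝓝 z, W w ≤ r) :
    uscEnvelope W z ≤ r :=
  limsup_le_of_le hW.isBoundedUnder_of_range.isCoboundedUnder_le h

variable [DenselyOrdered β]

lemma le_uscEnvelope (hW : BddAbove (range W)) (z : E) : W z ≤ uscEnvelope W z :=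
  le_of_forall_gt_imp_ge_of_dense fun _ hr =>
    (eventually_lt_of_uscEnvelope_lt hW hr).self_of_nhds.le

lemma upperSemicontinuous_uscEnvelope (hW : BddAbove (range W)) (hW' : BddBelow (range W)) :
    UpperSemicontinuous (uscEnvelope W) := by
  intro z r hr
  obtain ⟨r', hzr', hr'r⟩ := exists_between hr
  filter_upwards [(eventually_lt_of_uscEnvelope_lt hW hzr').eventually_nhds] with w hw
  exact (uscEnvelope_le_of_eventually_le hW' (hw.mono fun _ => le_of_lt)).trans_lt hr'r

end UscEnvelope

section Compact

lemma exists_lt_forall_le_of_upperSemicontinuousOn {E β : Type*} [TopologicalSpace E]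
    [LinearOrder β] [NoMinOrder β] {Q : Set E} {g : E → β} {r : β} (hQ : IsCompact Q)
    (hg : UpperSemicontinuousOn g Q) (hlt : ∀ z ∈ Q, g z < r) : ∃ r' < r, ∀ z ∈ Q, g z ≤ r' := by
  rcases Q.eq_empty_or_nonempty with rfl | hne
  · obtain ⟨r', hr'⟩ := exists_lt r
    exact ⟨r', hr', by simp⟩
  · obtain ⟨z, hzQ, hmax⟩ := hg.exists_isMaxOn hne hQ
    exact ⟨g z, hlt z hzQ, hmax⟩

variable {E F β : Type*} [TopologicalSpace E] [TopologicalSpace F] {S : Set E} {K : Set F}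
  {g : E → F → β}

lemma bddAbove_image_of_upperSemicontinuousOn_uncurry [LinearOrder β] [Nonempty β]
    (hK : IsCompact K) (hg : UpperSemicontinuousOn (uncurry g) (S ×ˢ K)) {z : E} (hz : z ∈ S) :
    BddAbove (g z '' K) :=
  UpperSemicontinuousOn.bddAbove_of_isCompact hK <|
    hg.comp (Continuous.prodMk_right z).continuousOn fun _ hξ => ⟨hz, hξ⟩

lemma upperSemicontinuousOn_sSup_image [ConditionallyCompleteLinearOrder β] [DenselyOrdered β]
    (hK : IsCompact K) (hne : K.Nonempty)
    (hg : UpperSemicontinuousOn (uncurry g) (S ×ˢ K)) :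
    UpperSemicontinuousOn (fun z => sSup (g z '' K)) S := by
  intro z hz r hr
  have : Nonempty β := ⟨r⟩
  have hbdd : BddAbove (g z '' K) := bddAbove_image_of_upperSemicontinuousOn_uncurry hK hg hz
  obtain ⟨r', hzr', hr'r⟩ := exists_between hr
  have hev : ∀ᶠ w in 𝓝 z, ∀ ξ ∈ K, w ∈ S → ξ ∈ K → g w ξ < r' := by
    refine hK.eventually_forall_of_forall_eventually fun ξ hξ => ?_
    have hlt : g z ξ < r' := (le_csSup hbdd (mem_image_of_mem _ hξ)).trans_lt hzr'
    filter_upwards [eventually_nhdsWithin_iff.1 (hg (z, ξ) ⟨hz, hξ⟩ r' hlt)] with w hw hwS hwK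
    exact hw ⟨hwS, hwK⟩
  filter_upwards [nhdsWithin_le_nhds hev, self_mem_nhdsWithin] with w hw hwS
  refine (csSup_le (hne.image _) ?_).trans_lt hr'r
  rintro _ ⟨ξ, hξ, rfl⟩
  exact (hw ξ hξ hwS hξ).le

end Compact

section Intervention

variable {K : Set (EucSp n)} {c : ℝ → EucSp n → EucSp n → ℝ} {W W' : ℝ → EucSp n → ℝ}
  {S : Set (ℝ × EucSp n)}

lemma upperSemicontinuousOn_translate_sub_cost (hW : UpperSemicontinuous (uncurry W))
    (hc : ContinuousOn (uncurry (uncurry c)) (S ×ˢ K)) :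
    UpperSemicontinuousOn
      (uncurry fun (z : ℝ × EucSp n) ξ => W z.1 (z.2 + ξ) - c z.1 z.2 ξ) (S ×ˢ K) := by
  have hshift : Continuous fun w : (ℝ × EucSp n) × EucSp n => (w.1.1, w.1.2 + w.2) := by fun_prop
  exact ((hW.comp hshift).upperSemicontinuousOn _).add hc.neg.upperSemicontinuousOn

lemma upperSemicontinuousOn_Mop (hK : IsCompact K) (hne : K.Nonempty)
    (hW : UpperSemicontinuous (uncurry W))
    (hc : ContinuousOn (uncurry (uncurry c)) (S ×ˢ K)) :
    UpperSemicontinuousOn (uncurry (Mop K c W)) S :=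
  upperSemicontinuousOn_sSup_image hK hne (upperSemicontinuousOn_translate_sub_cost hW hc)

lemma Mop_le_Mop {t : ℝ} {x : EucSp n} (hne : K.Nonempty)
    (hbdd : BddAbove ((fun ξ => W' t (x + ξ) - c t x ξ) '' K)) (hWW' : ∀ y, W t y ≤ W' t y) :
    Mop K c W t x ≤ Mop K c W' t x := by
  refine csSup_le (hne.image _) ?_
  rintro _ ⟨ξ, hξ, rfl⟩
  exact (sub_le_sub_right (hWW' _) _).trans (le_csSup hbdd (mem_image_of_mem _ hξ))

end Intervention

section StrictMax

variable {ι E : Type*} [TopologicalSpace E] [LocallyCompactSpace E] {v : ι → E → ℝ} {V φ : E → ℝ}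
  {a : E} {N : Set E} {ε : ℝ}

lemma exists_compact_nhds_uscEnvelope_sub_le (hN : N ∈ 𝓝 a) (hbdd : BddAbove (range V))
    (hbdd' : BddBelow (range V)) (hφ : Continuous φ)
    (hmax : ∀ᶠ z in 𝓝[≠] a, uscEnvelope V z - φ z < uscEnvelope V a - φ a) :
    ∃ Q ∈ 𝓝 a, IsCompact Q ∧ Q ⊆ N ∧
      ∃ r < uscEnvelope V a - φ a, ∀ z ∈ Q \ interior Q, uscEnvelope V z - φ z ≤ r := by
  obtain ⟨Q, hQa, hQN, hQ⟩ := local_compact_nhds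
    (inter_mem hN (eventually_nhdsWithin_iff.1 hmax))
  have husc : UpperSemicontinuous fun z => uscEnvelope V z + -φ z :=
    (upperSemicontinuous_uscEnvelope hbdd hbdd').add hφ.neg.upperSemicontinuous
  refine ⟨Q, hQa, hQ, fun z hz => (hQN hz).1, ?_⟩
  refine exists_lt_forall_le_of_upperSemicontinuousOn (hQ.diff isOpen_interior)
    (husc.upperSemicontinuousOn _) fun z hz => (hQN hz.1).2 ?_
  rintro rfl
  exact hz.2 (mem_interior_iff_mem_nhds.2 hQa)

/- The value of `v i - ψ` at a point close to `a` exceeds all its values on the boundary of a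
compact neighbourhood of `a`, so that its maximum over the neighbourhood is interior. -/
theorem exists_isLocalMax_sub_of_uscEnvelope_strict_max (hN : N ∈ 𝓝 a)
    (hv : ∀ i, ContinuousOn (v i) N) (hV : ∀ z, IsLUB (range fun i => v i z) (V z))
    (hbdd : BddAbove (range V)) (hbdd' : BddBelow (range V)) (hφ : Continuous φ)
    (hmax : ∀ᶠ z in 𝓝[≠] a, uscEnvelope V z - φ z < uscEnvelope V a - φ a) (hε : 0 < ε) :
    ∃ θ > 0, ∀ ψ : E → ℝ, Continuous ψ → (∀ z, |ψ z - φ z| ≤ θ) →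
      ∃ i, ∃ z ∈ N, IsLocalMax (fun w => v i w - ψ w) z ∧ uscEnvelope V a - ε < v i z := by
  have hv_le (i z) : v i z ≤ uscEnvelope V z :=
    ((hV z).1 (mem_range_self i)).trans (le_uscEnvelope hbdd z)
  have hφa : ∀ᶠ z in 𝓝 a, φ a - ε / 2 < φ z :=
    hφ.continuousAt.eventually (lt_mem_nhds (by linarith))
  obtain ⟨Q, hQa, hQ, hQN, r, hr, hQr⟩ :=
    exists_compact_nhds_uscEnvelope_sub_le (inter_mem hN hφa) hbdd hbdd' hφ hmax
  obtain ⟨θ, hθ, hθr, hθε⟩ : ∃ θ > 0, 4 * θ ≤ uscEnvelope V a - φ a - r ∧ 6 * θ ≤ ε := by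
    refine ⟨min ((uscEnvelope V a - φ a - r) / 4) (ε / 6),
      lt_min (by linarith) (by linarith), ?_, ?_⟩
    · linarith [min_le_left ((uscEnvelope V a - φ a - r) / 4) (ε / 6)]
    · linarith [min_le_right ((uscEnvelope V a - φ a - r) / 4) (ε / 6)]
  have hφθ : ∀ᶠ z in 𝓝 a, φ z < φ a + θ / 2 :=
    hφ.continuousAt.eventually (gt_mem_nhds (by linarith))
  obtain ⟨z₁, hVz₁, hφz₁, hz₁Q⟩ := ((frequently_lt_of_lt_uscEnvelope hbdd'
    (sub_lt_self (uscEnvelope V a) (half_pos hθ))).and_eventually (hφθ.and hQa)).exists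
  obtain ⟨_, ⟨i, rfl⟩, hvz₁⟩ := (lt_isLUB_iff (hV z₁)).1 hVz₁
  refine ⟨θ, hθ, fun ψ hψ hψφ => ?_⟩
  have hboundary : ∀ z ∈ Q \ interior Q, v i z - ψ z < v i z₁ - ψ z₁ := fun z hz => by
    linarith [hQr z hz, hv_le i z, abs_le.1 (hψφ z), abs_le.1 (hψφ z₁)]
  obtain ⟨z, hzQ, hzmax⟩ := hQ.exists_isMaxOn_mem_subset
    (((hv i).mono fun _ hw => (hQN hw).1).sub hψ.continuousOn) hz₁Q hboundary
  have hφz : φ a - ε / 2 < φ z := (hQN (interior_subset hzQ)).2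
  refine ⟨i, z, (hQN (interior_subset hzQ)).1,
    hzmax.isLocalMax (mem_interior_iff_mem_nhds.1 hzQ), ?_⟩
  have hle : v i z₁ - ψ z₁ ≤ v i z - ψ z := hzmax hz₁Q
  linarith [abs_le.1 (hψφ z), abs_le.1 (hψφ z₁)]

end StrictMax

section SeparatedTestFunctions

lemma tderiv_add (h : ℝ → ℝ) (g : EucSp n → ℝ) (t : ℝ) (x : EucSp n) :
    tderiv (fun s y => h s + g y) t x = deriv h t :=
  deriv_add_const _

lemma xgrad_add (h : ℝ → ℝ) (g : EucSp n → ℝ) (t : ℝ) (x : EucSp n) :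
    xgrad (fun s y => h s + g y) t x = gradient g x := by
  simp only [xgrad, gradient, fderiv_const_add]

lemma xhess_add (h : ℝ → ℝ) (g : EucSp n → ℝ) (t : ℝ) (x : EucSp n) :
    xhess (fun s y => h s + g y) t x =
      fun i j => fderiv ℝ (gradient g) x (EuclideanSpace.single j 1) i := by
  ext i j
  simp only [xhess, xgrad_add]

lemma contDiff_gradient {F : Type*} [NormedAddCommGroup F] [InnerProductSpace ℝ F]
    [CompleteSpace F] {g : F → ℝ} {k l : WithTop ℕ∞} (hg : ContDiff ℝ l g) (hkl : k + 1 ≤ l) :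
    ContDiff ℝ k (gradient g) :=
  (InnerProductSpace.toDual ℝ F).symm.contDiff.comp (hg.fderiv_right hkl)

lemma isC12On_add {h : ℝ → ℝ} {g : EucSp n → ℝ} (hh : ContDiff ℝ 1 h) (hg : ContDiff ℝ 2 g)
    (S : Set (ℝ × EucSp n)) : IsC12On (fun s y => h s + g y) S := by
  have hgrad : ContDiff ℝ 1 (gradient g) := contDiff_gradient hg (by norm_num)
  have hhess : Continuous fun y => fderiv ℝ (gradient g) y := hgrad.continuous_fderiv one_ne_zero
  constructor
  case cont =>
    exact ((hh.continuous.comp continuous_fst).add (hg.continuous.comp continuous_snd)).continuousOn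
  case diff_t => exact fun p _ => (hh.differentiable one_ne_zero _).add_const _
  case cont_t =>
    simp only [tderiv_add]
    exact ((hh.continuous_deriv le_rfl).comp continuous_fst).continuousOn
  case diff_x => exact fun p _ => (hg.differentiable two_ne_zero _).const_add _
  case diff_grad =>
    simp only [xgrad_add]
    exact fun p _ => hgrad.differentiable one_ne_zero _
  case cont_grad =>
    simp only [xgrad_add]
    exact (hgrad.continuous.comp continuous_snd).continuousOn
  case cont_hess =>
    simp only [xhess_add]
    exact (continuous_matrix fun i j => (EuclideanSpace.proj i).continuous.comp
      ((hhess.comp continuous_snd).clm_apply continuous_const)).continuousOn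

end SeparatedTestFunctions

section SmoothAbs

/-- A smooth approximation `√(s² + δ²)` of `|s|` with slope at most one. -/
def smoothAbs (δ s : ℝ) : ℝ := √(s ^ 2 + δ ^ 2)

lemma smoothAbs_zero_left (s : ℝ) : smoothAbs 0 s = |s| := by
  simp [smoothAbs, Real.sqrt_sq_eq_abs]

lemma continuous_smoothAbs (δ : ℝ) : Continuous (smoothAbs δ) := by
  unfold smoothAbs
  fun_prop

lemma contDiff_smoothAbs {δ : ℝ} (hδ : δ ≠ 0) {k : WithTop ℕ∞} : ContDiff ℝ k (smoothAbs δ) :=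
  ContDiff.sqrt (by fun_prop) fun s => by positivity

lemma abs_le_smoothAbs (δ s : ℝ) : |s| ≤ smoothAbs δ s :=
  Real.abs_le_sqrt (by nlinarith)

lemma smoothAbs_le_abs_add_abs (δ s : ℝ) : smoothAbs δ s ≤ |s| + |δ| :=
  Real.sqrt_le_iff.2 ⟨by positivity, by
    nlinarith [sq_abs s, sq_abs δ, mul_nonneg (abs_nonneg s) (abs_nonneg δ)]⟩

lemma deriv_smoothAbs_le_one {δ : ℝ} (hδ : δ ≠ 0) (s : ℝ) : deriv (smoothAbs δ) s ≤ 1 := by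
  have hpos : 0 < s ^ 2 + δ ^ 2 := by positivity
  have hderiv := ((((hasDerivAt_id s).pow 2).add_const (δ ^ 2)).sqrt hpos.ne').deriv
  rw [show smoothAbs δ = fun s => √((id ^ 2) s + δ ^ 2) from rfl, hderiv]
  simp only [Nat.cast_ofNat, id_eq, Nat.add_one_sub_one, pow_one, mul_one, Pi.pow_apply]
  rw [div_le_one₀ (by positivity)]
  exact mul_le_mul_of_nonneg_left (Real.le_sqrt_of_sq_le (by nlinarith)) zero_le_two

end SmoothAbs

section JetTest

lemma qform_eq_inner (X : Matrix (Fin n) (Fin n) ℝ) (v : EucSp n) :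
    qform X v = ⟪Matrix.toEuclideanCLM (𝕜 := ℝ) X v, v⟫ := by
  rw [real_inner_comm, Matrix.inner_toEuclideanCLM]
  simp only [qform, Matrix.mulVec, dotProduct, Finset.mul_sum]
  exact Finset.sum_congr rfl fun i _ => Finset.sum_congr rfl fun j _ => mul_comm _ _

lemma qform_add_smul_one (X : Matrix (Fin n) (Fin n) ℝ) (a : ℝ) (v : EucSp n) :
    qform (X + a • 1) v = qform X v + a * ‖v‖ ^ 2 := by
  simp only [qform_eq_inner, map_add, map_smul, map_one, _root_.add_apply, _root_.smul_apply,
    one_apply_eq_self, inner_add_left, real_inner_smul_left, real_inner_self_eq_norm_sq]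

lemma hasGradientAt_qform {Y : Matrix (Fin n) (Fin n) ℝ} (hY : Y.IsSymm) (v : EucSp n) :
    HasGradientAt (qform Y) ((2 : ℝ) • Matrix.toEuclideanCLM (𝕜 := ℝ) Y v) v := by
  have hsymm : (Matrix.toEuclideanCLM (𝕜 := ℝ) Y : EucSp n →ₗ[ℝ] EucSp n).IsSymmetric :=
    Matrix.isSymmetric_toEuclideanLin_iff.2 <| by
      rwa [IsHermitian, conjTranspose_eq_transpose_of_trivial]
  have hqform : qform Y = (Matrix.toEuclideanCLM (𝕜 := ℝ) Y).reApplyInnerSelf :=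
    funext (qform_eq_inner Y)
  rw [hasGradientAt_iff_hasFDerivAt, hqform]
  refine (hsymm.hasStrictFDerivAt_reApplyInnerSelf v).hasFDerivAt.congr_fderiv ?_
  ext w
  simp

/-- The quadratic polynomial centred at `x` with gradient `q` and Hessian `Y` at `x`. -/
def quadTest (q : EucSp n) (Y : Matrix (Fin n) (Fin n) ℝ) (x y : EucSp n) : ℝ :=
  ⟪q, y - x⟫ + (1 / 2) * qform Y (y - x)

lemma contDiff_quadTest (q : EucSp n) (Y : Matrix (Fin n) (Fin n) ℝ) (x : EucSp n)
    {k : WithTop ℕ∞} : ContDiff ℝ k (quadTest q Y x) := by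
  unfold quadTest
  have hsub : ContDiff ℝ k fun y => y - x := by fun_prop
  have hCLM := (Matrix.toEuclideanCLM (𝕜 := ℝ) Y).contDiff.comp hsub
  simp only [qform_eq_inner]
  exact (contDiff_const.inner ℝ hsub).add (contDiff_const.mul (hCLM.inner ℝ hsub))

lemma gradient_quadTest (q : EucSp n) {Y : Matrix (Fin n) (Fin n) ℝ} (hY : Y.IsSymm)
    (x : EucSp n) :
    gradient (quadTest q Y x) = fun y => q + Matrix.toEuclideanCLM (𝕜 := ℝ) Y (y - x) := by
  refine gradient_eq fun y => hasGradientAt_iff_hasFDerivAt.2 ?_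
  have hsub : HasFDerivAt (fun y : EucSp n => y - x) (ContinuousLinearMap.id ℝ (EucSp n)) y :=
    (hasFDerivAt_id y).sub_const x
  have hlin := (innerSL ℝ q).hasFDerivAt.comp y hsub
  have hquad := ((hasGradientAt_qform hY (y - x)).hasFDerivAt.comp y hsub).const_mul (1 / 2)
  refine (hlin.add hquad).congr_fderiv ?_
  ext w
  simp

lemma xhess_add_quadTest (h : ℝ → ℝ) (q : EucSp n) {Y : Matrix (Fin n) (Fin n) ℝ}
    (hY : Y.IsSymm) (x : EucSp n) (s : ℝ) (y : EucSp n) :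
    xhess (fun s y => h s + quadTest q Y x y) s y = Y := by
  have hfderiv : HasFDerivAt (fun y => q + Matrix.toEuclideanCLM (𝕜 := ℝ) Y (y - x))
      (Matrix.toEuclideanCLM (𝕜 := ℝ) Y) y :=
    ((Matrix.toEuclideanCLM (𝕜 := ℝ) Y).hasFDerivAt.comp y
      ((hasFDerivAt_id y).sub_const x)).const_add q
  ext i j
  rw [xhess_add, gradient_quadTest q hY, hfderiv.fderiv]
  simp [Matrix.ofLp_toEuclideanCLM]

/-- The test function touching from above, up to an error of order `a δ`, a function with
superjet element `(p, q, X)` at `(t, x)`. A superjet only controls `W` up to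
`o(|s - t| + |y - x|²)`, whence the term `a |s - t|`, smoothed to be differentiable in time. -/
def jetTest (p : ℝ) (q : EucSp n) (X : Matrix (Fin n) (Fin n) ℝ) (a δ t : ℝ) (x : EucSp n)
    (s : ℝ) (y : EucSp n) : ℝ :=
  (p * (s - t) + a * smoothAbs δ (s - t)) + quadTest q (X + (2 * a) • 1) x y

variable {X : Matrix (Fin n) (Fin n) ℝ} {a δ : ℝ}

lemma jetTest_zero_right (p t : ℝ) (q x : EucSp n) (X : Matrix (Fin n) (Fin n) ℝ) (a s : ℝ)
    (y : EucSp n) :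
    jetTest p q X a 0 t x s y = p * (s - t) + ⟪q, y - x⟫ + (1 / 2) * qform X (y - x)
      + a * (|s - t| + ‖y - x‖ ^ 2) := by
  rw [jetTest, quadTest, qform_add_smul_one, smoothAbs_zero_left]
  ring

lemma continuous_jetTest (p t : ℝ) (q x : EucSp n) (X : Matrix (Fin n) (Fin n) ℝ) (a δ : ℝ) :
    Continuous (uncurry (jetTest p q X a δ t x)) := by
  have hquad := (contDiff_quadTest q (X + (2 * a) • 1) x (k := 0)).continuous
  have habs := continuous_smoothAbs δ
  unfold uncurry jetTest
  fun_prop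

lemma abs_jetTest_sub_jetTest_zero_le (p t : ℝ) (q x : EucSp n) (X : Matrix (Fin n) (Fin n) ℝ)
    (ha : 0 ≤ a) (hδ : 0 ≤ δ) (s : ℝ) (y : EucSp n) :
    |jetTest p q X a δ t x s y - jetTest p q X a 0 t x s y| ≤ a * δ := by
  have hsub : jetTest p q X a δ t x s y - jetTest p q X a 0 t x s y
      = a * (smoothAbs δ (s - t) - |s - t|) := by
    simp only [jetTest, smoothAbs_zero_left]
    ring
  have hlower : 0 ≤ smoothAbs δ (s - t) - |s - t| := sub_nonneg.2 (abs_le_smoothAbs _ _)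
  have hupper : smoothAbs δ (s - t) - |s - t| ≤ δ := by
    linarith [smoothAbs_le_abs_add_abs δ (s - t), abs_of_nonneg hδ]
  rw [hsub, abs_of_nonneg (mul_nonneg ha hlower)]
  exact mul_le_mul_of_nonneg_left hupper ha

lemma isC12On_jetTest (p t : ℝ) (q x : EucSp n) (X : Matrix (Fin n) (Fin n) ℝ) (a : ℝ)
    (hδ : δ ≠ 0) (S : Set (ℝ × EucSp n)) : IsC12On (jetTest p q X a δ t x) S := by
  have habs : ContDiff ℝ 1 (smoothAbs δ) := contDiff_smoothAbs hδ
  exact isC12On_add (by fun_prop) (contDiff_quadTest _ _ _) S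

lemma tderiv_jetTest_le (p t : ℝ) (q x : EucSp n) (X : Matrix (Fin n) (Fin n) ℝ) (ha : 0 ≤ a)
    (hδ : δ ≠ 0) (s : ℝ) (y : EucSp n) : tderiv (jetTest p q X a δ t x) s y ≤ p + a := by
  have habs : HasDerivAt (fun s => smoothAbs δ (s - t)) (deriv (smoothAbs δ) (s - t)) s :=
    (((contDiff_smoothAbs hδ).differentiable one_ne_zero _).hasDerivAt).comp_sub_const s t
  have hderiv : HasDerivAt (fun s => p * (s - t) + a * smoothAbs δ (s - t))
      (p * 1 + a * deriv (smoothAbs δ) (s - t)) s :=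
    (((hasDerivAt_id s).sub_const t).const_mul p).add (habs.const_mul a)
  calc tderiv (jetTest p q X a δ t x) s y
      = p * 1 + a * deriv (smoothAbs δ) (s - t) := (tderiv_add _ _ s y).trans hderiv.deriv
    _ ≤ p + a := by
      nlinarith [mul_le_mul_of_nonneg_left (deriv_smoothAbs_le_one hδ (s - t)) ha]

lemma xgrad_jetTest (p t : ℝ) (q x : EucSp n) (hX : X.IsSymm) (a δ s : ℝ) (y : EucSp n) :
    xgrad (jetTest p q X a δ t x) s y
      = q + Matrix.toEuclideanCLM (𝕜 := ℝ) (X + (2 * a) • 1) (y - x) := by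
  unfold jetTest
  rw [xgrad_add, gradient_quadTest q (hX.add (isSymm_one.smul _))]

lemma xhess_jetTest (p t : ℝ) (q x : EucSp n) (hX : X.IsSymm) (a δ s : ℝ) (y : EucSp n) :
    xhess (jetTest p q X a δ t x) s y = X + (2 * a) • 1 :=
  xhess_add_quadTest _ q (hX.add (isSymm_one.smul _)) x s y

end JetTest

section StrictTouching

variable {U : ℝ → EucSp n → ℝ} {p t : ℝ} {q x : EucSp n} {X : Matrix (Fin n) (Fin n) ℝ} {a : ℝ}

lemma InSuperjet.eventually_sub_jetTest_lt (hjet : InSuperjet U t x p q X) (ha : 0 < a) :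
    ∀ᶠ z in 𝓝[≠] (t, x), uncurry U z - uncurry (jetTest p q X a 0 t x) z
      < uncurry U (t, x) - uncurry (jetTest p q X a 0 t x) (t, x) := by
  filter_upwards [nhdsWithin_le_nhds (hjet.2 (a / 2) (half_pos ha)), self_mem_nhdsWithin]
    with ⟨s, y⟩ hle hne
  have hpos : 0 < |s - t| + ‖y - x‖ ^ 2 := by
    rcases not_and_or.1 (Prod.ext_iff.not.1 hne) with hs | hy
    · exact add_pos_of_pos_of_nonneg (abs_pos.2 (sub_ne_zero.2 hs)) (sq_nonneg _)
    · exact add_pos_of_nonneg_of_pos (abs_nonneg _) (pow_pos (norm_pos_iff.2 (sub_ne_zero.2 hy)) 2)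
  have hcenter : jetTest p q X a 0 t x t x = 0 := by simp [jetTest_zero_right, qform]
  simp only [uncurry_apply_pair, hcenter, jetTest_zero_right]
  nlinarith

theorem InSuperjet.exists_isLocalMax_sub_jetTest {ι : Type*} {v : ι → ℝ → EucSp n → ℝ}
    {V : ℝ → EucSp n → ℝ} {N : Set (ℝ × EucSp n)} {ε : ℝ}
    (hjet : InSuperjet (curry (uscEnvelope (uncurry V))) t x p q X) (hN : N ∈ 𝓝 (t, x))
    (hv : ∀ i, ContinuousOn (uncurry (v i)) N)
    (hV : ∀ s y, IsLUB (range fun i => v i s y) (V s y)) (hbdd : BddAbove (range (uncurry V)))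
    (hbdd' : BddBelow (range (uncurry V))) (ha : 0 < a) (hε : 0 < ε) :
    ∃ i, ∃ δ > 0, ∃ z ∈ N,
      IsLocalMax (fun w => uncurry (v i) w - uncurry (jetTest p q X a δ t x) w) z ∧
        uscEnvelope (uncurry V) (t, x) - ε < uncurry (v i) z := by
  obtain ⟨θ, hθ, hmax⟩ := exists_isLocalMax_sub_of_uscEnvelope_strict_max hN hv
    (fun z => hV z.1 z.2) hbdd hbdd' (continuous_jetTest p t q x X a 0)
    (hjet.eventually_sub_jetTest_lt ha) hε
  have hδ : 0 < θ / a := div_pos hθ ha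
  have hclose (z : ℝ × EucSp n) :
      |uncurry (jetTest p q X a (θ / a) t x) z - uncurry (jetTest p q X a 0 t x) z| ≤ θ :=
    (abs_jetTest_sub_jetTest_zero_le p t q x X ha.le hδ.le z.1 z.2).trans_eq
      (mul_div_cancel₀ θ ha.ne')
  obtain ⟨i, hi⟩ := hmax _ (continuous_jetTest p t q x X a (θ / a)) hclose
  exact ⟨i, θ / a, hδ, hi⟩

end StrictTouching

section Subsolution

variable {b : ℝ → EucSp n → EucSp n} {σ : ℝ → EucSp n → Matrix (Fin n) (Fin d) ℝ}
  {f g v : ℝ → EucSp n → ℝ} {S : Set (ℝ × EucSp n)} {t : ℝ} {x : EucSp n}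

/-- The value `-p - ⟨b, q⟩ - ½ tr[σσᵀ X] - f` at `(t, x)` of the operator `-∂ₜ - L - f` on a
parabolic jet `(p, q, X)`. -/
def parabolicResidual (b : ℝ → EucSp n → EucSp n)
    (σ : ℝ → EucSp n → Matrix (Fin n) (Fin d) ℝ) (f : ℝ → EucSp n → ℝ) (t : ℝ) (x : EucSp n)
    (p : ℝ) (q : EucSp n) (X : Matrix (Fin n) (Fin n) ℝ) : ℝ :=
  -p - ⟪b t x, q⟫ - (1 / 2) * (σ t x * (σ t x)ᵀ * X).trace - f t x

lemma continuousAt_parabolicResidual (hb : ContinuousAt (uncurry b) (t, x))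
    (hσ : ContinuousAt (uncurry σ) (t, x)) (hf : ContinuousAt (uncurry f) (t, x)) (p : ℝ)
    (q : EucSp n) (X : Matrix (Fin n) (Fin n) ℝ) :
    ContinuousAt (fun w : (ℝ × EucSp n) × ℝ × EucSp n × Matrix (Fin n) (Fin n) ℝ =>
      parabolicResidual b σ f w.1.1 w.1.2 w.2.1 w.2.2.1 w.2.2.2) ((t, x), p, q, X) := by
  have hz := continuousAt_fst (p := ((t, x), p, q, X))
  have hrest := continuousAt_snd (p := ((t, x), p, q, X))
  have htrace : Continuous fun m : Matrix (Fin n) (Fin d) ℝ × Matrix (Fin n) (Fin n) ℝ =>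
      (m.1 * m.1ᵀ * m.2).trace := by fun_prop
  have hdrift := (hb.comp_of_eq hz rfl).inner (𝕜 := ℝ) hrest.snd.fst
  have hdiffusion :=
    htrace.continuousAt.comp ((hσ.comp_of_eq hz rfl).prodMk hrest.snd.snd)
  exact ((hrest.fst.neg.sub hdrift).sub (hdiffusion.const_mul _)).sub (hf.comp_of_eq hz rfl)

lemma exists_pos_eventually_parabolicResidual_pos (hb : ContinuousAt (uncurry b) (t, x))
    (hσ : ContinuousAt (uncurry σ) (t, x)) (hf : ContinuousAt (uncurry f) (t, x)) {p : ℝ}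
    {q : EucSp n} {X : Matrix (Fin n) (Fin n) ℝ} (hpos : 0 < parabolicResidual b σ f t x p q X) :
    ∃ a > 0, ∀ᶠ z in 𝓝 (t, x), 0 < parabolicResidual b σ f z.1 z.2 (p + a)
      (q + Matrix.toEuclideanCLM (𝕜 := ℝ) (X + (2 * a) • 1) (z.2 - x)) (X + (2 * a) • 1) := by
  have hgrad : Continuous fun w : ℝ × ℝ × EucSp n =>
      q + Matrix.toEuclideanCLM (𝕜 := ℝ) (X + (2 * w.1) • 1) (w.2.2 - x) := by
    simp only [map_add, map_smul, map_one, _root_.add_apply, _root_.smul_apply]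
    fun_prop
  have hjet : Continuous fun w : ℝ × ℝ × EucSp n =>
      (w.2, p + w.1, q + Matrix.toEuclideanCLM (𝕜 := ℝ) (X + (2 * w.1) • 1) (w.2.2 - x),
        X + (2 * w.1) • (1 : Matrix (Fin n) (Fin n) ℝ)) := by fun_prop
  have hcont := (continuousAt_parabolicResidual hb hσ hf p q X).comp_of_eq
    (hjet.continuousAt (x := (0, t, x))) (by simp)
  have hev := (hcont.eventually (lt_mem_nhds (by simpa using hpos))).curry_nhds
  obtain ⟨a, hares, ha⟩ :=
    ((hev.filter_mono nhdsWithin_le_nhds).and (self_mem_nhdsWithin (s := Ioi 0))).exists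
  exact ⟨a, ha, hares⟩

/-- `v` is a viscosity subsolution, in the test function sense, of the obstacle problem
`min{-∂ₜv - Lv - f, v - g} = 0` on `S`; local maxima are taken relative to `S`. -/
def IsObstacleSubsolutionOn (b : ℝ → EucSp n → EucSp n)
    (σ : ℝ → EucSp n → Matrix (Fin n) (Fin d) ℝ) (f g : ℝ → EucSp n → ℝ)
    (S : Set (ℝ × EucSp n)) (v : ℝ → EucSp n → ℝ) : Prop :=
  ∀ t x, (t, x) ∈ S → ∀ φ : ℝ → EucSp n → ℝ, IsC12On φ S →
    IsLocalMaxOn (fun p : ℝ × EucSp n => v p.1 p.2 - φ p.1 p.2) S (t, x) →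
    min (-(tderiv φ t x) - Lop b σ φ t x - f t x) (v t x - g t x) ≤ 0

lemma IsObstacleSubsolutionOn.min_parabolicResidual_le_zero
    (hv : IsObstacleSubsolutionOn b σ f g S v) {p a δ : ℝ} {q : EucSp n}
    {X : Matrix (Fin n) (Fin n) ℝ} (hX : X.IsSymm) (ha : 0 ≤ a) (hδ : δ ≠ 0)
    {z : ℝ × EucSp n} (hz : z ∈ S)
    (hmax : IsLocalMax (fun w => uncurry v w - uncurry (jetTest p q X a δ t x) w) z) :
    min (parabolicResidual b σ f z.1 z.2 (p + a)
        (q + Matrix.toEuclideanCLM (𝕜 := ℝ) (X + (2 * a) • 1) (z.2 - x)) (X + (2 * a) • 1))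
      (v z.1 z.2 - g z.1 z.2) ≤ 0 := by
  refine (min_le_min_right _ ?_).trans
    (hv z.1 z.2 hz _ (isC12On_jetTest p t q x X a hδ S) (hmax.on S))
  rw [Lop, xgrad_jetTest p t q x hX, xhess_jetTest p t q x hX, parabolicResidual]
  linarith [tderiv_jetTest_le p t q x X ha hδ z.1 z.2]

end Subsolution

lemma isLUB_range_succ_ciSup {α : Type*} [ConditionallyCompleteLattice α] {u : ℕ → α}
    (hu : Monotone u) (hbdd : BddAbove (range u)) :
    IsLUB (range fun m => u (m + 1)) (⨆ m, u m) := by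
  refine ⟨?_, fun r hr => ciSup_le fun m => (hu m.le_succ).trans (hr (mem_range_self m))⟩
  rintro _ ⟨m, rfl⟩
  exact le_ciSup hbdd (m + 1)

lemma abs_ciSup_le {ι α : Type*} [AddCommGroup α] [ConditionallyCompleteLinearOrder α]
    [IsOrderedAddMonoid α] [Nonempty ι] {u : ι → α} {C : α} (hu : ∀ i, |u i| ≤ C) :
    |⨆ i, u i| ≤ C := by
  have hbdd : BddAbove (range u) := ⟨C, forall_mem_range.2 fun i => (abs_le.1 (hu i)).2⟩
  obtain ⟨i⟩ := ‹Nonempty ι›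
  exact abs_le.2
    ⟨(abs_le.1 (hu i)).1.trans (le_ciSup hbdd i), ciSup_le fun i => (abs_le.1 (hu i)).2⟩

lemma interior_pdom (T : ℝ) (n : ℕ) : interior (pdom T n) = Ioo 0 T ×ˢ univ := by
  rw [pdom, interior_prod_eq, interior_Ico, interior_univ]

theorem subsolution_stability_general {ι : Type*} {S : Set (ℝ × EucSp n)}
    {b : ℝ → EucSp n → EucSp n} {σ : ℝ → EucSp n → Matrix (Fin n) (Fin d) ℝ}
    {f : ℝ → EucSp n → ℝ} (hb : ContinuousOn (uncurry b) S) (hσ : ContinuousOn (uncurry σ) S)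
    (hf : ContinuousOn (uncurry f) S) {K : Set (EucSp n)} (hK : IsCompact K)
    (hne : K.Nonempty) {c : ℝ → EucSp n → EucSp n → ℝ}
    (hc : ContinuousOn (uncurry (uncurry c)) (S ×ˢ K)) {u v : ι → ℝ → EucSp n → ℝ}
    {V : ℝ → EucSp n → ℝ} (hv : ∀ i, ContinuousOn (uncurry (v i)) S)
    (hsub : ∀ i, IsObstacleSubsolutionOn b σ f (Mop K c (u i)) S (v i))
    (hu : ∀ i t x, u i t x ≤ V t x) (hV : ∀ t x, IsLUB (range fun i => v i t x) (V t x))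
    {C : ℝ} (hC : ∀ t x, |V t x| ≤ C) {t : ℝ} {x : EucSp n} (htx : (t, x) ∈ interior S)
    {p : ℝ} {q : EucSp n} {X : Matrix (Fin n) (Fin n) ℝ}
    (hjet : InSuperjet (curry (uscEnvelope (uncurry V))) t x p q X) :
    min (parabolicResidual b σ f t x p q X)
      (uscEnvelope (uncurry V) (t, x) - Mop K c (curry (uscEnvelope (uncurry V))) t x) ≤ 0 := by
  set Vstar := curry (uscEnvelope (uncurry V))
  have hbdd : BddAbove (range (uncurry V)) :=
    ⟨C, forall_mem_range.2 fun z => (abs_le.1 (hC z.1 z.2)).2⟩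
  have hbdd' : BddBelow (range (uncurry V)) :=
    ⟨-C, forall_mem_range.2 fun z => (abs_le.1 (hC z.1 z.2)).1⟩
  by_contra! hpos
  obtain ⟨hres, hgap⟩ := lt_min_iff.1 hpos
  have hS : S ∈ 𝓝 (t, x) := mem_interior_iff_mem_nhds.1 htx
  have husc : UpperSemicontinuous (uncurry Vstar) := upperSemicontinuous_uscEnvelope hbdd hbdd'
  obtain ⟨r, hMr, hrV⟩ := exists_between (sub_pos.1 hgap)
  obtain ⟨a, ha, hresa⟩ := exists_pos_eventually_parabolicResidual_pos (hb.continuousAt hS)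
    (hσ.continuousAt hS) (hf.continuousAt hS) hres
  have hMop : ∀ᶠ z in 𝓝 (t, x), Mop K c Vstar z.1 z.2 < r :=
    nhdsWithin_eq_nhds.2 hS ▸ upperSemicontinuousOn_Mop hK hne husc hc _ (mem_of_mem_nhds hS) r hMr
  obtain ⟨i, δ, hδ, z, ⟨hzS, hzres, hzM⟩, hmax, hVz⟩ := hjet.exists_isLocalMax_sub_jetTest
    (inter_mem hS (hresa.and hMop)) (fun i => (hv i).mono inter_subset_left) hV hbdd hbdd' ha
    (sub_pos.2 hrV)
  have hM : Mop K c (u i) z.1 z.2 ≤ Mop K c Vstar z.1 z.2 :=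
    Mop_le_Mop hne (bddAbove_image_of_upperSemicontinuousOn_uncurry hK
      (upperSemicontinuousOn_translate_sub_cost husc hc) hzS) fun y =>
        (hu i z.1 y).trans (le_uscEnvelope hbdd (z.1, y))
  have hobst : 0 < v i z.1 z.2 - Mop K c (u i) z.1 z.2 := by
    simp only [uncurry, sub_sub_cancel] at hVz
    linarith
  exact ((hsub i).min_parabolicResidual_le_zero hjet.1 ha.le hδ.ne' hzS hmax).not_gt
    (lt_min hzres hobst)

/-- **Stability of subsolutions under increasing limits**: if each `V_m` is a continuous
viscosity subsolution of `min{−∂ₜV_m − LV_m − f, V_m − MV_{m−1}} = 0`, the sequence is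
nondecreasing and uniformly bounded, and `V = sup_m V_m` with usc envelope `V*`, then the
subsolution inequality holds at every superjet of `V*` on `(0,T) × ℝⁿ`. -/
theorem subsolution_stability
    {n d : ℕ} (hn : 0 < n) (hd : 0 < d) (T : ℝ) (hT : 0 < T)
    (b : ℝ → EucSp n → EucSp n) (σ : ℝ → EucSp n → Matrix (Fin n) (Fin d) ℝ)
    (f : ℝ → EucSp n → ℝ)
    -- (H1)
    (hb_cont : Continuous fun p : ℝ × EucSp n => b p.1 p.2)
    (hσ_cont : Continuous fun p : ℝ × EucSp n => σ p.1 p.2)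
    (hb_bdd : ∃ C, ∀ t x, ‖b t x‖ ≤ C)
    (hσ_bdd : ∃ C, ∀ t x i j, |σ t x i j| ≤ C)
    (hlip : ∃ C > (0:ℝ), ∀ t ∈ Set.Icc (0:ℝ) T, ∀ x x' : EucSp n,
      ‖b t x - b t x'‖ + (∑ i, ∑ j, |σ t x i j - σ t x' i j|) ≤ C * ‖x - x'‖)
    -- (H2)
    (hf_bdd : ∃ C, ∀ t x, |f t x| ≤ C)
    (hf_uc : UniformContinuousOn (fun p : ℝ × EucSp n => f p.1 p.2)
      (Set.Icc 0 T ×ˢ Set.univ))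
    -- (H3)
    (K : Set (EucSp n)) (hK : K.Nonempty) (hKcomp : IsCompact K)
    (c : ℝ → EucSp n → EucSp n → ℝ)
    (hc_uc : UniformContinuousOn (fun p : ℝ × EucSp n × EucSp n => c p.1 p.2.1 p.2.2)
      (Set.Icc 0 T ×ˢ Set.univ ×ˢ K))
    (k : ℝ) (hk : 0 < k) (hck : ∀ t x, ∀ ξ ∈ K, k ≤ c t x ξ)
    -- the nondecreasing, uniformly bounded sequence of continuous subsolutions
    (Vseq : ℕ → ℝ → EucSp n → ℝ)
    (hV_cont : ∀ m, ContinuousOn (fun p : ℝ × EucSp n => Vseq m p.1 p.2)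
      (Set.Icc 0 T ×ˢ Set.univ))
    (hV_mono : ∀ m t x, Vseq m t x ≤ Vseq (m + 1) t x)
    (hV_bdd : ∃ C, ∀ m t x, |Vseq m t x| ≤ C)
    (hV_sub : ∀ m : ℕ, 1 ≤ m → ∀ t₀ x₀, (t₀, x₀) ∈ pdom T n →
      ∀ φ : ℝ → EucSp n → ℝ, IsC12On φ (pdom T n) →
      IsLocalMaxOn (fun p : ℝ × EucSp n => Vseq m p.1 p.2 - φ p.1 p.2) (pdom T n) (t₀, x₀) →
      min (-(tderiv φ t₀ x₀) - Lop b σ φ t₀ x₀ - f t₀ x₀)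
          (Vseq m t₀ x₀ - Mop K c (Vseq (m - 1)) t₀ x₀) ≤ 0)
    -- the pointwise limit and its usc envelope
    (V : ℝ → EucSp n → ℝ) (hV : V = fun t x => ⨆ m, Vseq m t x)
    (Vstar : ℝ → EucSp n → ℝ)
    (hVstar : Vstar = fun t x =>
      limsup (fun p : ℝ × EucSp n => V p.1 p.2) (𝓝 (t, x))) :
    ∀ t x, (t, x) ∈ Set.Ioo (0:ℝ) T ×ˢ (Set.univ : Set (EucSp n)) →
      ∀ p : ℝ, ∀ q : EucSp n, ∀ X : Matrix (Fin n) (Fin n) ℝ,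
      InSuperjet Vstar t x p q X →
      min (-p - ⟪b t x, q⟫ - (1/2) * (σ t x * (σ t x)ᵀ * X).trace - f t x)
          (Vstar t x - Mop K c Vstar t x) ≤ 0 := by
  rintro t x htx p q X hjet
  subst hV hVstar
  obtain ⟨C, hC⟩ := hV_bdd
  have hsub : pdom T n ⊆ Icc 0 T ×ˢ univ := prod_mono_left Ico_subset_Icc_self
  have hbdd (s y) : BddAbove (range fun m => Vseq m s y) :=
    ⟨C, forall_mem_range.2 fun m => (abs_le.1 (hC m s y)).2⟩
  have hmono (s y) : Monotone fun m => Vseq m s y :=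
    monotone_nat_of_le_succ fun m => hV_mono m s y
  have hc_cont : ContinuousOn (uncurry (uncurry c)) (pdom T n ×ˢ K) :=
    hc_uc.continuousOn.comp (f := fun w : (ℝ × EucSp n) × EucSp n => (w.1.1, w.1.2, w.2))
      (by fun_prop) fun _ hw => ⟨(hsub hw.1).1, mem_univ _, hw.2⟩
  exact subsolution_stability_general (v := fun m => Vseq (m + 1)) hb_cont.continuousOn
    hσ_cont.continuousOn (hf_uc.continuousOn.mono hsub) hKcomp hK hc_cont
    (fun m => (hV_cont (m + 1)).mono hsub) (fun m => hV_sub (m + 1) m.succ_pos)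
    (fun m s y => le_ciSup (hbdd s y) m) (fun s y => isLUB_range_succ_ciSup (hmono s y) (hbdd s y))
    (fun s y => abs_ciSup_le fun m => hC m s y) (interior_pdom T n ▸ htx) hjet
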